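/- arXiv:1709.04292 — 2 statements merged into one kernel-verified Lean document; each statement's English description precedes it below -/
import Mathlib

section
/- There is no Radon, T^{×d}-invariant and totally dissipative measure on X^d for which X_∞^d is a conull set. In particular, there is no Radon, T^{×d}-invariant and totally dissipative measure on X^d whose marginals are absolutely continuous with respect to μ. -/
/-!
A point of `X_∞^d` has a forward orbit that returns infinitely often to `C_n^d`, for some `n`
depending only on `d` (`NFCX.exists_recurrent_tower`). A Radon measure gives finite mass to
`C_n^d`, so if it is invariant and carried by `X_∞^d`, every wandering set is null: the integral
over a wandering set `W` of the number of visits to `C_n^d` is the sum of the masses of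
`C_n^d ∩ T^j W`, hence finite, although the number of visits is almost everywhere infinite
(`measure_wandering_eq_zero`, a Borel–Cantelli argument). A totally dissipative such measure is
therefore zero.

Recurrence rests on the following descent. Suppose all coordinates climb tower `n_{ℓ+1}` during
a time window of length `h_{n_ℓ+1}`. No spacers other than single ones are inserted between
towers `n_ℓ + 1` and `n_{ℓ+1}`, so in a window of length `h_{n_ℓ+1}` each coordinate leaves
tower `n_ℓ + 1` at most once, for at most one unit of time (`NFCseq.oneHole_finite`). Among
`d + 1` well-spaced subwindows, one avoids the holes of all `d` coordinates
(`exists_common_window`). Passing then from tower `n_ℓ + 1` to tower `n_ℓ`, each coordinate meets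
at most one hole, of length at most `h_{n_ℓ-k(ℓ)} + 1` (`NFCseq.oneHole_step`), which is
negligible compared with `h_{n_ℓ}` since `k(ℓ) → ∞`. Because `n_ℓ - n_{ℓ-1} > 2ℓ`, the window that
survives is still longer than `h_{n_{ℓ-1}+1}` (`NFCseq.exists_large`), and the descent continues
down to a fixed level (`NFC.exists_visit`). The definition of `X_∞` supplies the initial windows,
arbitrarily far in the future.
-/

open MeasureTheory Set Filter Topology
open scoped ENNReal
open scoped Classical

noncomputable section

/-! ## The nearly finite Chacon transformation: symbolic model -/

/-- The alphabet `{*} ∪ ℕ` is modelled by `Option ℕ`, `none` playing the role of `*`. -/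
instance optionNatTop : TopologicalSpace (Option ℕ) := ⊥

/-- The data of the two sequences `(n_ℓ)` and `(ℓ_k)` used in the construction of the
nearly finite Chacon transformation, together with the growth conditions imposed on them. -/
structure NFCseq where
  nseq : ℕ → ℕ
  lseq : ℕ → ℕ
  nseq_zero : nseq 0 = 0
  lseq_zero : lseq 0 = 1
  lseq_strictMono : StrictMono lseq
  nseq_growth : ∀ ℓ : ℕ, 1 ≤ ℓ → nseq (ℓ - 1) + 2 * ℓ < nseq ℓ
  lseq_growth : ∀ k : ℕ, (2 : ℝ) ≤ (1 + ((7 : ℝ) ^ k)⁻¹) ^ (lseq (k + 1) - lseq k)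

namespace NFCseq

/-- `k(ℓ)`: the unique `k` with `ℓ_k ≤ ℓ < ℓ_{k+1}`. -/
def kOf (P : NFCseq) (ℓ : ℕ) : ℕ := sSup {k | P.lseq k ≤ ℓ}

/-- The heights `h_n` of the towers. -/
def hgt (P : NFCseq) : ℕ → ℕ
  | 0 => 1
  | n + 1 =>
    3 * P.hgt n +
      3 * (if hn : ∃ ℓ, 1 ≤ ℓ ∧ P.nseq ℓ = n then P.hgt (n - P.kOf (Nat.find hn)) else 0) + 1
termination_by n => n
decreasing_by all_goals omega

theorem hgt_pos (P : NFCseq) (n : ℕ) : 0 < P.hgt n := by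
  cases n with
  | zero => simp [hgt]
  | succ n => rw [hgt]; omega

/-- The number of spacers put above the first subcolumn at step `n+1`
(`h_{n-k(ℓ)}` if `n = n_ℓ`, and `0` otherwise). -/
def spa (P : NFCseq) (n : ℕ) : ℕ :=
  if hn : ∃ ℓ, 1 ≤ ℓ ∧ P.nseq ℓ = n then P.hgt (n - P.kOf (Nat.find hn)) else 0

/-- The map `p_n` sending the index of a level of tower `n+1` to the index of the level of
tower `n` containing it (`none` if that level lies outside tower `n`). -/
def pmap (P : NFCseq) (n j : ℕ) : Option ℕ :=
  if j < P.hgt n then some j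
  else if j < P.hgt n + P.spa n then none
  else if j < 2 * P.hgt n + P.spa n then some (j - (P.hgt n + P.spa n))
  else if j < 2 * P.hgt n + 2 * P.spa n + 1 then none
  else if j < 3 * P.hgt n + 2 * P.spa n + 1 then some (j - (2 * P.hgt n + 2 * P.spa n + 1))
  else none

/-- The defining property of points of the space `X`. -/
def Xspec (P : NFCseq) (x : ℕ → Option ℕ) : Prop :=
  (∀ n, x n = (x (n + 1)).bind (P.pmap n)) ∧ ∃ n, x n ≠ none

/-- The space `X` of the symbolic model, with its product (subspace) topology. -/
abbrev Xpt (P : NFCseq) : Type := {x : ℕ → Option ℕ // P.Xspec x}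

instance (P : NFCseq) : MeasurableSpace P.Xpt := borel _

/-- `L_n^j`, the `j`-th level of tower `n`. -/
def level (P : NFCseq) (n j : ℕ) : Set P.Xpt := {x | x.1 n = some j}

/-- `C_n`, the union of all levels of tower `n`. -/
def tower (P : NFCseq) (n : ℕ) : Set P.Xpt := {x | x.1 n ≠ none}

theorem pmap_zero (P : NFCseq) (n : ℕ) : P.pmap n 0 = some 0 := by
  unfold pmap
  simp [P.hgt_pos n]

/-- The point `𝟎 = (0,0,…)`. -/
def zeroPt (P : NFCseq) : P.Xpt :=
  ⟨fun _ => some 0, fun n => by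
    show some 0 = (some 0).bind (P.pmap n)
    simp [P.pmap_zero n], 0, by simp⟩

/-- `t_n(x) ∈ {1,2,3}`: the subcolumn of tower `n` to which `x` belongs
(junk value `0` if `x` is not in tower `n+1`). -/
def tcol (P : NFCseq) (n : ℕ) (x : P.Xpt) : ℕ :=
  match x.1 (n + 1) with
  | none => 0
  | some j =>
    if j < P.hgt n + P.spa n then 1
    else if j < 2 * P.hgt n + 2 * P.spa n + 1 then 2
    else 3

/-- The index (from `0` to `3^(m-n) - 1`, ordered from bottom to top of tower `m`) of the
occurrence of tower `n` inside tower `m` to which `x` belongs. -/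
def occIdx (P : NFCseq) (n m : ℕ) (x : P.Xpt) : ℕ :=
  ∑ r ∈ Finset.Ico n m, (P.tcol r x - 1) * 3 ^ (r - n)

/-- `x` belongs to one of the first hundred occurrences of tower `n` inside tower `m`. -/
def inFirstHundred (P : NFCseq) (n m : ℕ) (x : P.Xpt) : Prop := P.occIdx n m x < 100

/-- `x` belongs to one of the last hundred occurrences of tower `n` inside tower `m`. -/
def inLastHundred (P : NFCseq) (n m : ℕ) (x : P.Xpt) : Prop :=
  3 ^ (m - n) ≤ P.occIdx n m x + 100

end NFCseq

/-- The nearly finite Chacon transformation `T` together with its invariant measure `μ`. -/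
structure NFC extends NFCseq where
  T : toNFCseq.Xpt → toNFCseq.Xpt
  μ : Measure toNFCseq.Xpt
  T_inj : Function.Injective T
  T_range : Set.range T = {toNFCseq.zeroPt}ᶜ
  T_up : ∀ x : toNFCseq.Xpt, ∃ N : ℕ, ∀ n, N ≤ n →
    ∃ j : ℕ, x.1 n = some j ∧ (T x).1 n = some (j + 1)
  T_meas : Measurable T
  μ_level : ∀ n j : ℕ, j < toNFCseq.hgt n →
    μ (toNFCseq.level n j) = (3 : ℝ≥0∞)⁻¹ ^ n
  μ_pres : MeasurePreserving T μ μ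
  μ_sfin : SigmaFinite μ

namespace NFC

/-- `X^d`. -/
abbrev Xd (S : NFC) (d : ℕ) : Type := Fin d → S.toNFCseq.Xpt

/-- The Cartesian power `T^{×d}`. -/
def Td (S : NFC) (d : ℕ) : S.Xd d → S.Xd d := fun y i => S.T (y i)

/-- `C_n^d`. -/
def towerD (S : NFC) (d n : ℕ) : Set (S.Xd d) := {y | ∀ i, y i ∈ S.toNFCseq.tower n}

/-- `B` is an `n`-box. -/
def IsNBox (S : NFC) (d n : ℕ) (B : Set (S.Xd d)) : Prop :=
  ∃ v : Fin d → ℕ, (∀ i, v i < S.toNFCseq.hgt n) ∧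
    B = {y : S.Xd d | ∀ i, y i ∈ S.toNFCseq.level n (v i)}

/-- A measure on `X^d` is Radon iff it is finite on each `C_n^d`. -/
def IsRadon (S : NFC) (d : ℕ) (σ : Measure (S.Xd d)) : Prop :=
  ∀ n, σ (S.towerD d n) < ⊤

/-- `σ` is `T^{×d}`-invariant. -/
def InvariantD (S : NFC) (d : ℕ) (σ : Measure (S.Xd d)) : Prop :=
  ∀ A : Set (S.Xd d), MeasurableSet A → σ ((S.Td d) ⁻¹' A) = σ A

/-- `T^{-e} A`, the preimage of `A` under `T^e` for `e ∈ ℤ` (image for negative `e`). -/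
def preT (S : NFC) : ℤ → Set S.toNFCseq.Xpt → Set S.toNFCseq.Xpt
  | Int.ofNat k, A => S.T^[k] ⁻¹' A
  | Int.negSucc k, A => S.T^[k + 1] '' A

/-- `σ` is a graph measure arising from powers of `T` on `X^ι`:
`σ(∏ᵢ Aᵢ) = α · μ(⋂ᵢ T^{-eᵢ} Aᵢ)`. -/
def IsGraphMeasure (S : NFC) {ι : Type} (σ : Measure (ι → S.toNFCseq.Xpt)) : Prop :=
  ∃ α : ℝ≥0∞, 0 < α ∧ α ≠ ⊤ ∧ ∃ e : ι → ℤ,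
    ∀ A : ι → Set S.toNFCseq.Xpt, (∀ i, MeasurableSet (A i)) →
      σ (Set.univ.pi A) = α * S.μ (⋂ i, S.preT (e i) (A i))

/-- `σ = σ^{D_1} ⊗ ⋯ ⊗ σ^{D_r}` for a partition `D_1, …, D_r` of `{1,…,d}` where each
`σ^{D_j}` is a graph measure on `X^{D_j}` arising from powers of `T`. -/
def IsProductOfGraphMeasures (S : NFC) (d : ℕ) (σ : Measure (S.Xd d)) : Prop :=
  ∃ (r : ℕ) (D : Fin r → Finset (Fin d)),
    (∀ j, (D j).Nonempty) ∧
    (∀ j j', j ≠ j' → Disjoint (D j) (D j')) ∧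
    (∀ i : Fin d, ∃ j, i ∈ D j) ∧
    ∃ σD : ∀ j : Fin r, Measure ({i // i ∈ D j} → S.toNFCseq.Xpt),
      (∀ j, S.IsGraphMeasure (σD j)) ∧
      ∀ A : Fin d → Set S.toNFCseq.Xpt, (∀ i, MeasurableSet (A i)) →
        σ (Set.univ.pi A) =
          ∏ j : Fin r, σD j (Set.univ.pi fun i : {i // i ∈ D j} => A i.1)

end NFC


/-- `(T)^j W` for `j ∈ ℤ`: forward images for `j ≥ 0`, preimages for `j < 0`. -/
def iterZ {α : Type*} (f : α → α) : ℤ → Set α → Set α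
  | Int.ofNat k, A => f^[k] '' A
  | Int.negSucc k, A => f^[k + 1] ⁻¹' A

namespace NFC

/-- `σ` is totally dissipative: there is a wandering set `W` whose `ℤ`-orbit covers
`X^d` up to a `σ`-null set. -/
def TotallyDissipative (S : NFC) (d : ℕ) (σ : Measure (S.Xd d)) : Prop :=
  ∃ W : Set (S.Xd d), MeasurableSet W ∧
    (∀ j j' : ℤ, j ≠ j' → Disjoint (iterZ (S.Td d) j W) (iterZ (S.Td d) j' W)) ∧
    σ (⋃ j : ℤ, iterZ (S.Td d) j W)ᶜ = 0

/-- The ring `𝓡` of finite unions of `n`-boxes. -/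
def BoxRing (S : NFC) (d : ℕ) : Set (Set (S.Xd d)) :=
  {B | ∃ n : ℕ, ∃ 𝔅 : Finset (Set (S.Xd d)), (∀ b ∈ 𝔅, S.IsNBox d n b) ∧ B = ⋃₀ ↑𝔅}

/-- Convergence of a sequence of Radon measures on `X^d`. -/
def RTendsto (S : NFC) (d : ℕ) (σk : ℕ → Measure (S.Xd d)) (σ : Measure (S.Xd d)) : Prop :=
  ∀ n : ℕ, 0 < σ (S.towerD d n) →
    (∀ᶠ k in atTop, 0 < σk k (S.towerD d n)) ∧
    ∀ B : Set (S.Xd d), S.IsNBox d n B →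
      Tendsto (fun k => σk k B / σk k (S.towerD d n)) atTop
        (𝓝 (σ B / σ (S.towerD d n)))

/-- The edge `∂C_n^d` of `C_n^d`. -/
def edgeD (S : NFC) (d n : ℕ) : Set (S.Xd d) :=
  {y | y ∈ S.towerD d n ∧ ∃ i, y i ∈ S.toNFCseq.level n 0 ∨
    y i ∈ S.toNFCseq.level n (S.toNFCseq.hgt n - 1)}

/-- `Ω_m`: the union of all `m`-boxes `L_m^{j_1} × ⋯ × L_m^{j_d}` with `j_i ≠ 0` for all `i`. -/
def OmegaD (S : NFC) (d m : ℕ) : Set (S.Xd d) :=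
  {y | ∀ i, ∃ j : ℕ, j ≠ 0 ∧ j < S.toNFCseq.hgt m ∧ y i ∈ S.toNFCseq.level m j}

/-- A twisting transformation on `X^d`: it applies `T` to the coordinates in a nonempty
proper subset `G_1 ⊆ {1,…,d}` and the identity to the others. -/
def IsTwist (S : NFC) (d : ℕ) (Sw : S.Xd d → S.Xd d) : Prop :=
  ∃ G : Fin d → Bool, (∃ i, G i = true) ∧ (∃ i, G i = false) ∧
    ∀ (y : S.Xd d) (i : Fin d), Sw y i = if G i then S.T (y i) else y i

/-- The empirical measure `γ_J = ∑_{j ∈ J} δ_{(T^{×d})^j x}` along a two-sided orbit `o`. -/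
def emp (S : NFC) (d : ℕ) (o : ℤ → S.Xd d) (J : Finset ℤ) : Measure (S.Xd d) :=
  ∑ j ∈ J, Measure.dirac (o j)

end NFC

/-- `J` is a (nonempty finite) interval of `ℤ`. -/
def IsIntervalZ (J : Finset ℤ) : Prop := ∃ a b : ℤ, a ≤ b ∧ J = Finset.Icc a b

namespace NFC

/-- `J` is an `n`-crossing for the orbit `o` of a point of `X^d`: a maximal interval on which
the orbit stays in `C_n^d` with all the `t_n(T^j x_i)` constant. -/
def IsCrossing (S : NFC) (d : ℕ) (o : ℤ → S.Xd d) (n : ℕ) (J : Finset ℤ) : Prop :=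
  IsIntervalZ J ∧
  (∀ j ∈ J, o j ∈ S.towerD d n) ∧
  (∀ i : Fin d, ∀ j ∈ J, ∀ j' ∈ J, S.toNFCseq.tcol n (o j i) = S.toNFCseq.tcol n (o j' i)) ∧
  ∀ J' : Finset ℤ, J ⊆ J' → IsIntervalZ J' →
    (∀ j ∈ J', o j ∈ S.towerD d n) →
    (∀ i : Fin d, ∀ j ∈ J', ∀ j' ∈ J', S.toNFCseq.tcol n (o j i) = S.toNFCseq.tcol n (o j' i)) →
    J' = J

/-- An `n`-crossing is synchronized if `t_n(T^j x_1) = ⋯ = t_n(T^j x_d)` on it. -/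
def IsSync (S : NFC) (d : ℕ) (o : ℤ → S.Xd d) (n : ℕ) (J : Finset ℤ) : Prop :=
  ∀ j ∈ J, ∀ i i' : Fin d, S.toNFCseq.tcol n (o j i) = S.toNFCseq.tcol n (o j i')

end NFC

/-- The interval `I_n` of length `h_n` centered at `0`. -/
def Imid (P : NFCseq) (n : ℕ) : Finset ℤ :=
  Finset.Icc (-((P.hgt n / 2 : ℕ) : ℤ)) (-((P.hgt n / 2 : ℕ) : ℤ) + P.hgt n - 1)

namespace NFC

/-- A substantial `n`-crossing: an `n`-crossing whose intersection with `I_n` has at least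
`η·h_n` elements. -/
def IsSubstantial (S : NFC) (d : ℕ) (o : ℤ → S.Xd d) (η : ℝ) (n : ℕ) (J : Finset ℤ) : Prop :=
  S.IsCrossing d o n J ∧ η * S.toNFCseq.hgt n ≤ ((J ∩ Imid S.toNFCseq n).card : ℝ)

/-- `x_i` climbs into tower `n` along the interval `I`. -/
def Climbs (S : NFC) (d : ℕ) (o : ℤ → S.Xd d) (i : Fin d) (n : ℕ) (I : Finset ℤ) : Prop :=
  (∀ j ∈ I, (o j) i ∈ S.toNFCseq.tower n) ∧
  ¬ ∃ j : ℤ, j ∈ I ∧ j + 1 ∈ I ∧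
      (o j) i ∈ S.toNFCseq.level n (S.toNFCseq.hgt n - 1) ∧
      (o (j + 1)) i ∈ S.toNFCseq.level n 0

end NFC

/-- The nearly finite Chacon system together with the conull set `X_∞` and the function
`x ↦ ℓ(x)` of Lemma 2.3. -/
structure NFCX extends NFC where
  Xinf : Set toNFCseq.Xpt
  ellx : toNFCseq.Xpt → ℕ
  Xinf_conull : μ Xinfᶜ = 0
  Xinf_spec : ∀ x ∈ Xinf, ∀ ℓ : ℕ, ellx x ≤ ℓ → ∀ n : ℕ,
    nseq (ℓ - 1) ≤ n → n + ℓ ≤ nseq ℓ →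
      x ∈ toNFCseq.tower n ∧ ¬ toNFCseq.inFirstHundred n (nseq ℓ) x ∧
        ¬ toNFCseq.inLastHundred n (nseq ℓ) x

namespace NFCX

/-- `o` is the two-sided orbit of a `σ`-typical point `x = o 0` (satisfying
conditions (1), (2) and (3) of Section 3.4 of the paper). -/
def IsTypicalOrbit (S : NFCX) (d : ℕ) (σ : Measure (S.toNFC.Xd d))
    (o : ℤ → S.toNFC.Xd d) : Prop :=
  (∀ j : ℤ, S.toNFC.Td d (o j) = o (j + 1)) ∧
  (∀ j : ℤ, ∀ n : ℕ, 0 < σ (S.toNFC.towerD d n) →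
    ∀ B : Set (S.toNFC.Xd d), S.toNFC.IsNBox d n B →
    ∀ a b : ℕ → ℤ, (∀ k, a k ≤ 0) → (∀ k, 0 ≤ b k) →
      Tendsto (fun k => b k - a k) atTop atTop →
      Tendsto (fun k =>
          (((Finset.Icc (a k) (b k)).filter (fun j' => o (j + j') ∈ B)).card : ℝ) /
            (((Finset.Icc (a k) (b k)).filter
              (fun j' => o (j + j') ∈ S.toNFC.towerD d n)).card : ℝ))
        atTop (𝓝 ((σ B).toReal / (σ (S.toNFC.towerD d n)).toReal))) ∧
  (∀ n : ℕ, ∀ B : Set (S.toNFC.Xd d), S.toNFC.IsNBox d n B → o 0 ∈ B → 0 < σ B) ∧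
  (∀ i : Fin d, (o 0) i ∈ S.Xinf)

end NFCX

/-! ## Subsets of `ℤ` of order `ℓ` inside an interval -/

/-- A piece of `F ∩ I`: a maximal interval included in `F ∩ I`. -/
def IsPieceZ (F : Set ℤ) (I : Finset ℤ) (J : Finset ℤ) : Prop :=
  IsIntervalZ J ∧ (↑J : Set ℤ) ⊆ F ∩ ↑I ∧
    ∀ J' : Finset ℤ, IsIntervalZ J' → (↑J' : Set ℤ) ⊆ F ∩ ↑I → J ⊆ J' → J' = J

/-- A hole of `F ∩ I`: a maximal interval included in `I \ F`. -/
def IsHoleZ (F : Set ℤ) (I : Finset ℤ) (J : Finset ℤ) : Prop :=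
  IsIntervalZ J ∧ (↑J : Set ℤ) ⊆ (↑I : Set ℤ) \ F ∧
    ∀ J' : Finset ℤ, IsIntervalZ J' → (↑J' : Set ℤ) ⊆ (↑I : Set ℤ) \ F → J ⊆ J' → J' = J

/-- Each hole of `F ∩ I` has size at most `s`. -/
def HolesSmall (F : Set ℤ) (I : Finset ℤ) (s : ℕ) : Prop :=
  ∀ H : Finset ℤ, IsHoleZ F I H → H.card ≤ s

/-- Two consecutive holes of `F ∩ I` are always separated by a piece of size at least `c`. -/
def HolesSeparated (F : Set ℤ) (I : Finset ℤ) (c : ℕ) : Prop :=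
  ∀ H₁ H₂ : Finset ℤ, IsHoleZ F I H₁ → IsHoleZ F I H₂ →
    (∀ a ∈ H₁, ∀ b ∈ H₂, a < b) →
    ∃ J : Finset ℤ, IsPieceZ F I J ∧ c ≤ J.card ∧ ∀ a ∈ H₁, ∀ b ∈ H₂, ∀ x ∈ J, a < x ∧ x < b

/-- `F` is of order `ℓ ≥ 1` inside the interval `I`, with respect to the sequences `c`, `s`. -/
def IsOrder (c s : ℕ → ℕ) : ℕ → Set ℤ → Finset ℤ → Prop
  | 0, _, _ => False
  | 1, F, I => HolesSmall F I (s 1) ∧ HolesSeparated F I (c 1)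
  | (ℓ + 2), F, I => ∃ F' : Set ℤ, F ⊆ F' ∧ HolesSmall F' I (s (ℓ + 2)) ∧
      HolesSeparated F' I (c (ℓ + 2)) ∧
      ∀ J : Finset ℤ, IsPieceZ F' I J → IsOrder c s (ℓ + 1) F J

/-- `p_1`: the smallest integer such that `3^{p_1} > 2d+1` and `p_1 > d`. -/
def pOne (d : ℕ) : ℕ := sInf {p : ℕ | 2 * d + 1 < 3 ^ p ∧ d < p}

/-- `p_2`: the smallest integer such that `1/3^{p_2} < η/3`. -/
def pTwo (η : ℝ) : ℕ := sInf {p : ℕ | ((3 : ℝ) ^ p)⁻¹ < η / 3}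


namespace NFCseq

/-! ### Levels of consecutive towers -/

theorem hgt_succ (P : NFCseq) (n : ℕ) : P.hgt (n + 1) = 3 * P.hgt n + 3 * P.spa n + 1 := by
  rw [hgt]; rfl

theorem hgt_lt_succ (P : NFCseq) (n : ℕ) : P.hgt n < P.hgt (n + 1) := by
  rw [hgt_succ]; omega

theorem hgt_strictMono (P : NFCseq) : StrictMono P.hgt := strictMono_nat_of_lt_succ P.hgt_lt_succ

theorem pow_mul_hgt_le (P : NFCseq) (n k : ℕ) : 3 ^ k * P.hgt n ≤ P.hgt (n + k) := by
  induction k with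
  | zero => simp
  | succ k ih =>
    rw [← add_assoc, hgt_succ, pow_succ]
    nlinarith

/-- The three copies of tower `n` inside tower `n + 1` start at levels `0`, `h_n + s` and
`2 h_n + 2 s + 1`, where `s` is the number of spacers above the first subcolumn. -/
theorem pmap_eq_some (P : NFCseq) (n j i : ℕ) :
    P.pmap n j = some i ↔ i < P.hgt n ∧
      (j = i ∨ j = P.hgt n + P.spa n + i ∨ j = 2 * P.hgt n + 2 * P.spa n + 1 + i) := by
  unfold pmap
  split_ifs <;> simp only [Option.some.injEq, false_iff] <;> omega

theorem Xspec_ne_none (P : NFCseq) (x : P.Xpt) {n m : ℕ} (hnm : n ≤ m) (h : x.1 n ≠ none) :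
    x.1 m ≠ none := by
  induction m, hnm using Nat.le_induction with
  | base => exact h
  | succ m _ ih =>
    intro h0
    apply ih
    rw [x.2.1 m, h0]; rfl

theorem eq_some_lt (P : NFCseq) (x : P.Xpt) {n j : ℕ} (h : x.1 n = some j) : j < P.hgt n := by
  rw [x.2.1 n, Option.bind_eq_some_iff] at h
  obtain ⟨a, _, ha⟩ := h
  exact ((P.pmap_eq_some n a j).1 ha).1

/-- `P.desc n k j` is the index of the level of tower `n` containing level `j` of tower `n + k`
(`none` if there is no such level). -/
def desc (P : NFCseq) (n : ℕ) : ℕ → ℕ → Option ℕ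
  | 0, j => some j
  | k + 1, j => (P.pmap (n + k) j).bind (P.desc n k)

theorem eq_desc (P : NFCseq) (x : P.Xpt) (n k : ℕ) : x.1 n = (x.1 (n + k)).bind (P.desc n k) := by
  induction k with
  | zero => simp [desc]
  | succ k ih =>
    rw [ih, x.2.1 (n + k), Option.bind_assoc]
    rfl

theorem desc_bottom (P : NFCseq) (n k j : ℕ) (hj : j < P.hgt n) : P.desc n k j = some j := by
  induction k with
  | zero => rfl
  | succ k ih =>
    have h : P.pmap (n + k) j = some j :=
      (P.pmap_eq_some _ _ _).2 ⟨hj.trans_le (P.hgt_strictMono.monotone (by omega)), Or.inl rfl⟩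
    simp [desc, h, ih]

theorem desc_top (P : NFCseq) (n k : ℕ) (hs : ∀ r < k, P.spa (n + r) = 0) (j i : ℕ)
    (hi : i < P.hgt n) (hj : j + P.hgt n = P.hgt (n + k) + i) : P.desc n k j = some i := by
  induction k generalizing j with
  | zero => simp only [desc, Option.some.injEq]; simp at hj; omega
  | succ k ih =>
    have h1 := P.hgt_succ (n + k)
    have h2 := hs k (by omega)
    have h3 : P.hgt n ≤ P.hgt (n + k) := P.hgt_strictMono.monotone (by omega)
    have e : n + (k + 1) = n + k + 1 := rfl
    rw [e] at hj
    have h : P.pmap (n + k) j = some (P.hgt (n + k) + i - P.hgt n) :=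
      (P.pmap_eq_some _ _ _).2 ⟨by omega, by omega⟩
    simp only [desc, h, Option.bind_some]
    exact ih (fun r hr => hs r (by omega)) _ (by omega)

/-- The window of `L` consecutive levels of tower `n + k` starting at level `j` has a hole
`[u, u + s)`, in coordinates relative to `j`, such that every subwindow disjoint from it consists
of consecutive levels of a single copy of tower `n`. The hole may be longer than the actual gap; a
passage from the top of one copy directly to the bottom of the next also has to be cut by it. -/
def OneHole (P : NFCseq) (n k s j L : ℕ) : Prop :=
  ∃ u, ∀ b M, 1 ≤ M → b + M ≤ L → (b + M ≤ u ∨ u + s ≤ b) →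
    ∃ i, P.desc n k (j + b) = some i ∧ i + M ≤ P.hgt n

/-- Between two exceptional steps `n_ℓ` there are only isolated spacers, so a window no longer
than the tower meets at most one of them. -/
theorem oneHole_finite (P : NFCseq) (n k : ℕ) (hs : ∀ r < k, P.spa (n + r) = 0) (j L : ℕ)
    (hL : L ≤ P.hgt n) (hj : j + L ≤ P.hgt (n + k)) : P.OneHole n k 1 j L := by
  induction k generalizing j with
  | zero =>
    refine ⟨L, fun b M _ h _ => ⟨j + b, rfl, ?_⟩⟩
    simp at hj; omega
  | succ k ih =>
    have h1 := P.hgt_succ (n + k)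
    have h2 := hs k (by omega)
    have h3 : P.hgt n ≤ P.hgt (n + k) := P.hgt_strictMono.monotone (by omega)
    have hs' : ∀ r < k, P.spa (n + r) = 0 := fun r hr => hs r (by omega)
    have e : n + (k + 1) = n + k + 1 := rfl
    rw [e] at hj
    -- a window inside a single copy of tower `n + k` is handled by induction
    have inside : ∀ j', j' + L ≤ P.hgt (n + k) →
        (∀ t, t < L → P.pmap (n + k) (j + t) = some (j' + t)) → P.OneHole n (k + 1) 1 j L := by
      intro j' hj' ht
      obtain ⟨u, hu⟩ := ih hs' j' hj'
      refine ⟨u, fun b M hM hb hbu => ?_⟩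
      obtain ⟨i, hi, hiM⟩ := hu b M hM hb hbu
      exact ⟨i, by simp only [desc, ht b (by omega), Option.bind_some, hi], hiM⟩
    -- a window straddling two copies meets the last `h_n` levels of the lower one and the
    -- first `h_n` levels of the upper one, so the cut is at their boundary
    have cross : ∀ u, u ≤ L →
        (∀ t, t < u → P.pmap (n + k) (j + t) = some (P.hgt (n + k) - u + t)) →
        (∀ t, u + 1 ≤ t → t < L → ∃ v, v ≤ t - u ∧ t ≤ u + 1 + v ∧ P.pmap (n + k) (j + t) = some v) →
        P.OneHole n (k + 1) 1 j L := by
      intro u hu hlo hhi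
      refine ⟨u, fun b M hM hb hbu => ?_⟩
      rcases hbu with hbu | hbu
      · refine ⟨P.hgt n - u + b, ?_, by omega⟩
        simp only [desc, hlo b (by omega), Option.bind_some]
        exact P.desc_top n k hs' _ _ (by omega) (by omega)
      · obtain ⟨v, hv1, hv2, hv⟩ := hhi b hbu (by omega)
        refine ⟨v, ?_, by omega⟩
        simp only [desc, hv, Option.bind_some]
        exact P.desc_bottom n k v (by omega)
    set h := P.hgt (n + k) with hh
    by_cases c1 : j + L ≤ h
    · exact inside j c1 fun t ht => (P.pmap_eq_some _ _ _).2 ⟨by omega, by omega⟩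
    by_cases c2 : j < h
    · refine cross (h - j) (by omega)
        (fun t ht => (P.pmap_eq_some _ _ _).2 ⟨by omega, by omega⟩) ?_
      intro t ht htL
      exact ⟨j + t - h, by omega, by omega, (P.pmap_eq_some _ _ _).2 ⟨by omega, by omega⟩⟩
    by_cases c3 : j + L ≤ 2 * h
    · exact inside (j - h) (by omega)
        fun t ht => (P.pmap_eq_some _ _ _).2 ⟨by omega, by omega⟩
    by_cases c4 : j < 2 * h
    · refine cross (2 * h - j) (by omega)
        (fun t ht => (P.pmap_eq_some _ _ _).2 ⟨by omega, by omega⟩) ?_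
      intro t ht htL
      exact ⟨j + t - (2 * h + 1), by omega, by omega,
        (P.pmap_eq_some _ _ _).2 ⟨by omega, by omega⟩⟩
    by_cases c5 : j = 2 * h
    · refine cross 0 (by omega) (fun t ht => by omega) ?_
      intro t ht htL
      exact ⟨t - 1, by omega, by omega, (P.pmap_eq_some _ _ _).2 ⟨by omega, by omega⟩⟩
    · exact inside (j - (2 * h + 1)) (by omega)
        fun t ht => (P.pmap_eq_some _ _ _).2 ⟨by omega, by omega⟩

/-- A window of tower `n + 1` no longer than tower `n` meets at most one gap, of length at most
`s_n + 1`. -/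
theorem oneHole_step (P : NFCseq) (n j L : ℕ) (hL : L ≤ P.hgt n) (hj : j + L ≤ P.hgt (n + 1)) :
    P.OneHole n 1 (P.spa n + 1) j L := by
  have h1 := P.hgt_succ n
  have key : ∀ u, (∀ b M, 1 ≤ M → b + M ≤ L → (b + M ≤ u ∨ u + (P.spa n + 1) ≤ b) →
      ∃ i, P.pmap n (j + b) = some i ∧ i + M ≤ P.hgt n) → P.OneHole n 1 (P.spa n + 1) j L := by
    intro u hu
    refine ⟨u, fun b M hM hb hbu => ?_⟩
    obtain ⟨i, hi, hiM⟩ := hu b M hM hb hbu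
    refine ⟨i, ?_, hiM⟩
    simp [desc, hi]
  set h := P.hgt n with hh
  set s := P.spa n with hs
  -- `key` is applied at the start of the gap above the relevant copy; when the window starts
  -- inside a gap the hole is placed at the beginning of the window
  by_cases c1 : j < h + s
  · refine key (h - j) fun b M hM hb hbu => ?_
    by_cases hc : j + b < h
    · exact ⟨j + b, (P.pmap_eq_some _ _ _).2 ⟨by omega, by omega⟩, by omega⟩
    · exact ⟨j + b - (h + s), (P.pmap_eq_some _ _ _).2 ⟨by omega, by omega⟩, by omega⟩
  by_cases c2 : j < 2 * h + 2 * s + 1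
  · refine key (2 * h + s - j) fun b M hM hb hbu => ?_
    by_cases hc : j + b < 2 * h + s
    · exact ⟨j + b - (h + s), (P.pmap_eq_some _ _ _).2 ⟨by omega, by omega⟩, by omega⟩
    · exact ⟨j + b - (2 * h + 2 * s + 1), (P.pmap_eq_some _ _ _).2 ⟨by omega, by omega⟩, by omega⟩
  · refine key (3 * h + 2 * s + 1 - j) fun b M hM hb hbu => ?_
    exact ⟨j + b - (2 * h + 2 * s + 1), (P.pmap_eq_some _ _ _).2 ⟨by omega, by omega⟩, by omega⟩

/-! ### The exceptional steps -/

theorem nseq_lt_succ (P : NFCseq) (m : ℕ) : P.nseq m + 2 * (m + 1) < P.nseq (m + 1) :=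
  P.nseq_growth (m + 1) (by omega)

theorem nseq_strictMono (P : NFCseq) : StrictMono P.nseq :=
  strictMono_nat_of_lt_succ fun m => by have := P.nseq_lt_succ m; omega

theorem spa_nseq (P : NFCseq) (m : ℕ) (hm : 1 ≤ m) :
    P.spa (P.nseq m) = P.hgt (P.nseq m - P.kOf m) := by
  have hn : ∃ ℓ, 1 ≤ ℓ ∧ P.nseq ℓ = P.nseq m := ⟨m, hm, rfl⟩
  unfold spa
  rw [dif_pos hn, P.nseq_strictMono.injective (Nat.find_spec hn).2]

theorem spa_eq_zero (P : NFCseq) (m r : ℕ) (h1 : P.nseq m < r) (h2 : r < P.nseq (m + 1)) :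
    P.spa r = 0 := by
  unfold spa
  rw [dif_neg]
  rintro ⟨l, _, rfl⟩
  have := P.nseq_strictMono.lt_iff_lt.1 h1
  have := P.nseq_strictMono.lt_iff_lt.1 h2
  omega

theorem kOf_bddAbove (P : NFCseq) (m : ℕ) : BddAbove {k | P.lseq k ≤ m} :=
  ⟨m, fun _ hk => (P.lseq_strictMono.le_apply).trans hk⟩

theorem le_kOf (P : NFCseq) (m k : ℕ) (h : P.lseq k ≤ m) : k ≤ P.kOf m :=
  le_csSup (P.kOf_bddAbove m) h

theorem kOf_le (P : NFCseq) (m : ℕ) (hm : 1 ≤ m) : P.kOf m ≤ m :=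
  csSup_le ⟨0, by simp [P.lseq_zero, hm]⟩
    fun _ hk => (P.lseq_strictMono.le_apply).trans hk

/-- As `k(ℓ) → ∞`, both the gap length `s + 1` at step `n_ℓ` and the height of tower
`n_{ℓ-1} + 1` become negligible with respect to `h_{n_ℓ}`. -/
theorem exists_large (P : NFCseq) (D : ℕ) : ∃ m₀, 1 ≤ m₀ ∧ ∀ m, m₀ ≤ m →
    D * (D * (P.hgt (P.nseq m + 1) + (P.spa (P.nseq (m + 1)) + 1)) + 1) ≤
      P.hgt (P.nseq (m + 1)) := by
  refine ⟨P.lseq (8 * D * D) + 8 * D * D + 1, by omega, fun m hm => ?_⟩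
  have hk : 8 * D * D ≤ P.kOf (m + 1) := P.le_kOf _ _ (by omega)
  have hk' := P.kOf_le (m + 1) (by omega)
  have hg := P.nseq_lt_succ m
  rw [P.spa_nseq (m + 1) (by omega)]
  set p := P.nseq (m + 1) with hp
  set k := P.kOf (m + 1) with hkdef
  have a1 : 3 ^ k * P.hgt (p - k) ≤ P.hgt p := by
    have := P.pow_mul_hgt_le (p - k) k
    rwa [Nat.sub_add_cancel (by omega)] at this
  have a2 : 3 ^ (p - (P.nseq m + 1)) * P.hgt (P.nseq m + 1) ≤ P.hgt p := by
    have := P.pow_mul_hgt_le (P.nseq m + 1) (p - (P.nseq m + 1))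
    rwa [Nat.add_sub_cancel' (by omega)] at this
  have b1 : 8 * D * D ≤ 3 ^ k := hk.trans (Nat.lt_pow_self (by norm_num)).le
  have b2 : 8 * D * D ≤ 3 ^ (p - (P.nseq m + 1)) :=
    le_trans (by omega : 8 * D * D ≤ p - (P.nseq m + 1)) (Nat.lt_pow_self (by norm_num)).le
  have c1 : 8 * D * D * P.hgt (p - k) ≤ P.hgt p := (Nat.mul_le_mul_right _ b1).trans a1
  have c2 : 8 * D * D * P.hgt (P.nseq m + 1) ≤ P.hgt p := (Nat.mul_le_mul_right _ b2).trans a2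
  have d1 := P.hgt_pos (p - k)
  have d2 : 8 * D * D ≤ P.hgt p := le_trans (Nat.le_mul_of_pos_right _ d1) c1
  have d3 : D ≤ D * D := Nat.le_mul_self D
  nlinarith

/-! ### Occurrences -/

/-- The occurrences of tower `n` inside tower `n + k` from the current one upwards are
`3 ^ k - occIdx` in number and all lie in tower `n + k`. Written additively, with `j - i` the
bottom level of the current occurrence, to avoid truncated subtraction. -/
theorem occIdx_bound (P : NFCseq) (x : P.Xpt) (n i : ℕ) (hx : x.1 n = some i) (k j : ℕ)
    (hj : x.1 (n + k) = some j) :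
    j + 3 ^ k * P.hgt n ≤ P.hgt (n + k) + i + P.occIdx n (n + k) x * P.hgt n := by
  induction k generalizing j with
  | zero =>
    simp only [add_zero] at hj
    rw [hx] at hj
    obtain rfl := Option.some.inj hj
    simp; omega
  | succ k ih =>
    have hne : x.1 (n + k) ≠ none := P.Xspec_ne_none x (Nat.le_add_right n k) (by simp [hx])
    obtain ⟨j', hj'⟩ := Option.ne_none_iff_exists'.1 hne
    have ih' := ih j' hj'
    have hj2 : x.1 (n + k + 1) = some j := hj
    have hp : P.pmap (n + k) j = some j' := by
      have := x.2.1 (n + k)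
      rw [hj', hj2] at this
      exact this.symm
    obtain ⟨hlt, hc⟩ := (P.pmap_eq_some _ _ _).1 hp
    have hocc : P.occIdx n (n + (k + 1)) x =
        P.occIdx n (n + k) x + (P.tcol (n + k) x - 1) * 3 ^ k := by
      unfold occIdx
      rw [← add_assoc, Finset.sum_Ico_succ_top (by omega), Nat.add_sub_cancel_left]
    have hpw := P.pow_mul_hgt_le n k
    have hsucc := P.hgt_succ (n + k)
    have ht : P.tcol (n + k) x = if j < P.hgt (n + k) + P.spa (n + k) then 1
        else if j < 2 * P.hgt (n + k) + 2 * P.spa (n + k) + 1 then 2 else 3 := by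
      unfold tcol; rw [hj2]
    rw [hocc, ← add_assoc, hsucc, pow_succ, add_mul]
    have hmul : ∀ c : ℕ, c * 3 ^ k * P.hgt n = c * (3 ^ k * P.hgt n) := fun c => mul_assoc _ _ _
    have h3 : 3 ^ k * 3 * P.hgt n = 3 * (3 ^ k * P.hgt n) := by ring
    rw [hmul, h3]
    generalize 3 ^ k * P.hgt n = Q at *
    rcases hc with hc | hc | hc
    · rw [if_pos (by omega)] at ht
      rw [ht]; omega
    · rw [if_neg (by omega), if_pos (by omega)] at ht
      rw [ht]; omega
    · rw [if_neg (by omega), if_neg (by omega)] at ht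
      rw [ht]; omega

end NFCseq

/-- A family of `d` holes of length `s`, one for each coordinate, cannot meet all of `d + 1`
candidate windows of length `M` that are `s` apart. -/
theorem exists_common_window (d L M s : ℕ) (u : Fin d → ℕ) (h : (d + 1) * (M + s) ≤ L) :
    ∃ b, b + M ≤ L ∧ ∀ i, b + M ≤ u i ∨ u i + s ≤ b := by
  by_contra! hcon
  have hL : ∀ k : Fin (d + 1), (k : ℕ) * (M + s) + M ≤ L := fun k => by
    have : ((k : ℕ) + 1) * (M + s) ≤ (d + 1) * (M + s) := Nat.mul_le_mul_right _ (by omega)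
    rw [add_mul, one_mul] at this
    omega
  choose f hf using fun k : Fin (d + 1) => hcon _ (hL k)
  obtain ⟨k, k', hne, hk⟩ := Fintype.exists_ne_map_eq_of_card_lt f (by simp)
  have key : ∀ a b : Fin (d + 1), a < b → f a = f b → False := by
    intro a b hab hfab
    have h1 := hf a
    have h2 := hf b
    rw [← hfab] at h2
    have : ((a : ℕ) + 1) * (M + s) ≤ (b : ℕ) * (M + s) := Nat.mul_le_mul_right _ hab
    rw [add_mul, one_mul] at this
    omega
  rcases lt_or_gt_of_ne hne with h' | h'
  · exact key _ _ h' hk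
  · exact key _ _ h' hk.symm

namespace NFC

/-! ### Orbits climbing into towers -/

theorem T_step (S : NFC) (x : S.toNFCseq.Xpt) (m j : ℕ) (hx : x.1 m = some j)
    (hj : j + 1 < S.hgt m) : (S.T x).1 m = some (j + 1) := by
  obtain ⟨N, hN⟩ := S.T_up x
  -- the formula holds in high towers and is pulled down one tower at a time
  have main : ∀ k m j, m + k = max m N → x.1 m = some j → j + 1 < S.hgt m →
      (S.T x).1 m = some (j + 1) := by
    intro k
    induction k with
    | zero =>
      intro m j hk hx hj
      obtain ⟨j', h1, h2⟩ := hN m (by omega)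
      rw [hx] at h1
      rw [h2, Option.some.inj h1]
    | succ k ih =>
      intro m j hk hx hj
      have hx' := hx
      rw [x.2.1 m, Option.bind_eq_some_iff] at hx'
      obtain ⟨j', hj', hp⟩ := hx'
      obtain ⟨h1, h2⟩ := (S.pmap_eq_some _ _ _).1 hp
      have h3 := S.hgt_succ m
      have h4 := ih (m + 1) j' (by omega) hj' (by omega)
      rw [(S.T x).2.1 m, h4]
      exact (S.pmap_eq_some _ _ _).2 ⟨hj, by omega⟩
  exact main (max m N - m) m j (by omega) hx hj

theorem T_iterate (S : NFC) (x : S.toNFCseq.Xpt) (m j t : ℕ) (hx : x.1 m = some j)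
    (hj : j + t < S.hgt m) : (S.T^[t] x).1 m = some (j + t) := by
  induction t with
  | zero => simpa using hx
  | succ t ih =>
    rw [Function.iterate_succ_apply']
    exact S.T_step _ m (j + t) (ih (by omega)) hj

/-- The points `x, T x, …, T^{L-1} x` lie on consecutive levels of tower `m`. -/
def Climb (S : NFC) (x : S.toNFCseq.Xpt) (m L : ℕ) : Prop := ∃ j, x.1 m = some j ∧ j + L ≤ S.hgt m

theorem Climb.shift {S : NFC} {x : S.toNFCseq.Xpt} {m L : ℕ} (h : S.Climb x m L) {b M : ℕ}
    (hM : 1 ≤ M) (hb : b + M ≤ L) : S.Climb (S.T^[b] x) m M := by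
  obtain ⟨j, hx, hj⟩ := h
  exact ⟨j + b, S.T_iterate x m j b hx (by omega), by omega⟩

/-- If all coordinates climb tower `n + k` for time `L`, and each such window has a single hole
as seen from tower `n`, then at some time all coordinates climb tower `n` for a time of order
`L / (d + 1)`. -/
theorem climb_down (S : NFC) (d : ℕ) (y : S.Xd d) (n k s L M : ℕ) (hM : 1 ≤ M)
    (hy : ∀ i, S.Climb (y i) (n + k) L)
    (hole : ∀ j, j + L ≤ S.hgt (n + k) → S.OneHole n k s j L) (hL : (d + 1) * (M + s) ≤ L) :
    ∃ b, b + M ≤ L ∧ ∀ i, S.Climb (S.T^[b] (y i)) n M := by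
  choose j hj hjL using hy
  choose u hu using fun i => hole (j i) (hjL i)
  obtain ⟨b, hb, hbu⟩ := exists_common_window d L M s u hL
  refine ⟨b, hb, fun i => ?_⟩
  obtain ⟨a, ha, haM⟩ := hu i b M hM hb (hbu i)
  refine ⟨a, ?_, haM⟩
  have hlt : j i + b < S.hgt (n + k) := by have := hjL i; omega
  rw [S.eq_desc (S.T^[b] (y i)) n k, S.T_iterate (y i) (n + k) (j i) b (hj i) hlt]
  exact ha

/-- If all coordinates climb tower `n_{m+1}` for a time `h_{n_m + 1}`, then some forward iterate
lies in `C_{n_{m₀+1}}^d`, where `m₀` does not depend on `m` or on the point. -/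
theorem exists_visit (S : NFC) (d m₀ : ℕ)
    (hm₀ : ∀ m, m₀ ≤ m →
      (d + 1) * ((d + 1) * (S.hgt (S.nseq m + 1) + (S.spa (S.nseq (m + 1)) + 1)) + 1) ≤
        S.hgt (S.nseq (m + 1)))
    (m : ℕ) (hm : m₀ ≤ m) (y : S.Xd d)
    (hy : ∀ i, S.Climb (y i) (S.nseq (m + 1)) (S.hgt (S.nseq m + 1))) :
    ∃ t, (fun i => S.T^[t] (y i)) ∈ S.towerD d (S.nseq (m₀ + 1)) := by
  induction m, hm using Nat.le_induction generalizing y with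
  | base =>
    refine ⟨0, fun i => ?_⟩
    obtain ⟨j, hj, _⟩ := hy i
    simp [NFCseq.tower, hj]
  | succ m hm ih =>
    have hg := S.nseq_lt_succ (m + 1)
    have hp := S.hgt_pos (S.nseq m + 1)
    have hlarge := hm₀ m hm
    set p := S.nseq (m + 1) with hpdef
    have hlt : S.hgt p < S.hgt (p + 1) := S.hgt_lt_succ p
    set M := S.hgt (S.nseq m + 1) with hMdef
    set D := d + 1 with hD
    set M₁ := D * (M + (S.spa p + 1)) with hM₁
    have hM₁pos : 1 ≤ M₁ := Nat.mul_pos (by omega) (by omega)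
    have hM₁le : M₁ ≤ S.hgt p := by
      have : 1 * (M₁ + 1) ≤ D * (M₁ + 1) := Nat.mul_le_mul_right _ (by omega)
      omega
    obtain ⟨k, hk⟩ : ∃ k, S.nseq (m + 1 + 1) = p + 1 + k :=
      ⟨_, (Nat.add_sub_cancel' (by omega)).symm⟩
    rw [hk] at hy
    obtain ⟨b₁, -, h₁⟩ := S.climb_down d y (p + 1) k 1 (S.hgt (p + 1)) M₁ hM₁pos hy
      (fun j hj => S.oneHole_finite _ _
        (fun r hr => S.spa_eq_zero (m + 1) _ (by omega) (by omega)) _ _ le_rfl hj)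
      (hlarge.trans hlt.le)
    obtain ⟨b₂, -, h₂⟩ := S.climb_down d (fun i => S.T^[b₁] (y i)) p 1 (S.spa p + 1) M₁ M hp h₁
      (fun j hj => S.oneHole_step _ _ _ hM₁le hj) le_rfl
    obtain ⟨t, ht⟩ := ih _ h₂
    refine ⟨t + (b₂ + b₁), ?_⟩
    simpa only [Function.iterate_add_apply] using ht

end NFC

namespace NFCX

/-- Points of `X_∞^d` visit a fixed `C_n^d` infinitely often, with `n` depending on `d` only. -/
theorem exists_recurrent_tower (S : NFCX) (d : ℕ) : ∃ n, ∀ y : S.toNFC.Xd d,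
    (∀ i, y i ∈ S.Xinf) → ∀ N, ∃ t, N ≤ t ∧ (S.toNFC.Td d)^[t] y ∈ S.toNFC.towerD d n := by
  obtain ⟨m₀, -, hm₀⟩ := S.exists_large (d + 1)
  refine ⟨S.nseq (m₀ + 1), fun y hy N => ?_⟩
  set m := m₀ + N + ∑ i, S.ellx (y i) with hm
  have hell : ∀ i, S.ellx (y i) ≤ m + 1 := fun i => by
    have := Finset.single_le_sum (f := fun i => S.ellx (y i)) (fun i _ => Nat.zero_le _)
      (Finset.mem_univ i)
    omega
  have hg := S.nseq_lt_succ m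
  set n := S.nseq (m + 1) - (m + 1) with hn
  have hnm : n + (m + 1) = S.nseq (m + 1) := by omega
  have hlen : N + S.hgt (S.nseq m + 1) ≤ S.hgt n := by
    have h1 : N + (S.nseq m + 1) ≤ n := by omega
    exact (S.hgt_strictMono.add_le_nat N (S.nseq m + 1)).trans (S.hgt_strictMono.monotone h1)
  have hclimb : ∀ i, S.toNFC.Climb (y i) (S.nseq (m + 1)) (S.hgt n) := by
    intro i
    obtain ⟨h1, -, h3⟩ := S.Xinf_spec (y i) (hy i) (m + 1) (hell i) n
      (by simp only [Nat.add_sub_cancel]; omega) hnm.le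
    obtain ⟨a, ha⟩ := Option.ne_none_iff_exists'.1 h1
    obtain ⟨j, hj⟩ := Option.ne_none_iff_exists'.1
      (S.Xspec_ne_none (y i) (Nat.le_add_right n (m + 1)) h1)
    have hb := S.occIdx_bound (y i) n a ha (m + 1) j hj
    have halt := S.eq_some_lt (y i) ha
    rw [← hnm] at h3 ⊢
    refine ⟨j, hj, ?_⟩
    unfold NFCseq.inLastHundred at h3
    rw [Nat.add_sub_cancel_left] at h3
    have h5 : (S.occIdx n (n + (m + 1)) (y i) + 2) * S.hgt n ≤ 3 ^ (m + 1) * S.hgt n :=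
      Nat.mul_le_mul_right _ (by omega)
    rw [add_mul] at h5
    omega
  obtain ⟨t, ht⟩ := S.toNFC.exists_visit d m₀ hm₀ m (by omega) (fun i => S.T^[N] (y i))
    (fun i => (hclimb i).shift (S.hgt_pos _) hlen)
  refine ⟨t + N, by omega, ?_⟩
  have hTd : ∀ r, ∀ z : S.toNFC.Xd d, (S.toNFC.Td d)^[r] z = fun i => S.T^[r] (z i) := by
    intro r
    induction r with
    | zero => intro z; rfl
    | succ r ih => intro z; rw [Function.iterate_succ_apply, ih]; rfl
  rw [hTd]
  simpa only [Function.iterate_add_apply] using ht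

end NFCX

/-! ### Dissipativity and recurrence -/

instance (P : NFCseq) : BorelSpace P.Xpt := ⟨rfl⟩

instance : DiscreteTopology (Option ℕ) := ⟨rfl⟩

theorem isOpen_coord_mem (n : ℕ) (A : Set (Option ℕ)) :
    IsOpen {x : ℕ → Option ℕ | x n ∈ A} :=
  (isOpen_discrete A).preimage (continuous_apply n)

/-- `X` is the intersection of a closed and an open subset of a Polish space. -/
instance (P : NFCseq) : StandardBorelSpace P.Xpt := by
  let _ : MeasurableSpace (Option ℕ) := ⊤
  have : BorelSpace (Option ℕ) := ⟨(borel_eq_top_of_discrete).symm⟩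
  have hs : MeasurableSet {x : ℕ → Option ℕ | P.Xspec x} := by
    have h1 : IsClosed {x : ℕ → Option ℕ | ∀ n, x n = (x (n + 1)).bind (P.pmap n)} := by
      rw [Set.ofPred_forall]
      refine isClosed_iInter fun n => isClosed_eq (continuous_apply n) ?_
      exact (continuous_of_discreteTopology (f := fun o : Option ℕ => o.bind (P.pmap n))).comp
        (continuous_apply (n + 1))
    have h2 : IsOpen {x : ℕ → Option ℕ | ∃ n, x n ≠ none} := by
      rw [Set.ofPred_exists]
      exact isOpen_iUnion fun n => isOpen_coord_mem n {none}ᶜ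
    exact h1.measurableSet.inter h2.measurableSet
  have := hs.standardBorel
  have e : (Subtype.instMeasurableSpace : MeasurableSpace P.Xpt) = borel P.Xpt :=
    (Subtype.borelSpace {x : ℕ → Option ℕ | P.Xspec x}).measurable_eq
  have h3 : @StandardBorelSpace P.Xpt Subtype.instMeasurableSpace := this
  rw [e] at h3
  exact h3

/-- A wandering set almost all of whose points return infinitely often to a set of finite measure
is null: the expected number of visits is at most the measure of that set. -/
theorem measure_wandering_eq_zero {α : Type*} [MeasurableSpace α] [StandardBorelSpace α]
    (σ : Measure α) (f : α → α) (hf : Measurable f) (hinj : Function.Injective f)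
    (hinv : ∀ A, MeasurableSet A → σ (f ⁻¹' A) = σ A) (C : Set α) (hC : MeasurableSet C)
    (hCfin : σ C < ⊤) (hrec : ∀ᵐ y ∂σ, ∀ N, ∃ t, N ≤ t ∧ f^[t] y ∈ C) (W : Set α)
    (hW : MeasurableSet W)
    (hdisj : ∀ j j' : ℕ, j ≠ j' → Disjoint (f^[j] '' W) (f^[j'] '' W)) : σ W = 0 := by
  have hmp : ∀ t, MeasurePreserving f^[t] σ σ := fun t =>
    (⟨hf, Measure.ext fun A hA => by rw [Measure.map_apply hf hA, hinv A hA]⟩ :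
      MeasurePreserving f σ σ).iterate t
  have himg : ∀ t, MeasurableSet (f^[t] '' W) := fun t =>
    hW.image_of_measurable_injOn (hf.iterate t) (hinj.iterate t).injOn
  have h1 : ∀ t, σ (W ∩ f^[t] ⁻¹' C) = σ (f^[t] '' W ∩ C) := fun t => by
    rw [← (hmp t).measure_preimage ((himg t).inter hC).nullMeasurableSet, preimage_inter,
      preimage_image_eq _ (hinj.iterate t)]
  have h2 : ∑' t, σ (W ∩ f^[t] ⁻¹' C) ≤ σ C := by
    simp_rw [h1]
    refine (tsum_meas_le_meas_iUnion_of_disjoint σ (fun t => (himg t).inter hC) ?_).trans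
      (measure_mono (iUnion_subset fun t => inter_subset_right))
    intro j j' hjj
    exact (hdisj j j' hjj).mono inter_subset_left inter_subset_left
  have h3 : σ (limsup (fun t => W ∩ f^[t] ⁻¹' C) atTop) = 0 :=
    measure_limsup_atTop_eq_zero (h2.trans_lt hCfin).ne
  refine measure_mono_null_ae ?_ h3
  filter_upwards [hrec] with y hy hyW
  change y ∈ limsup (fun t => W ∩ f^[t] ⁻¹' C) atTop
  rw [mem_limsup_iff_frequently_mem, frequently_atTop]
  intro N
  obtain ⟨t, ht, hyt⟩ := hy N
  exact ⟨t, ht, hyW, hyt⟩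

/-- A dissipative invariant measure giving finite mass to a set that almost every forward orbit
visits infinitely often is zero. -/
theorem NFC.eq_zero_of_recurrent (S : NFC) (d : ℕ) (σ : Measure (S.Xd d))
    (hinv : S.InvariantD d σ) (hdis : S.TotallyDissipative d σ) (n : ℕ)
    (hfin : σ (S.towerD d n) < ⊤)
    (hrec : ∀ᵐ y ∂σ, ∀ N, ∃ t, N ≤ t ∧ (S.Td d)^[t] y ∈ S.towerD d n) : σ = 0 := by
  obtain ⟨W, hW, hdisj, hcov⟩ := hdis
  have hTd : Measurable (S.Td d) :=
    measurable_pi_lambda _ fun i => S.T_meas.comp (measurable_pi_apply i)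
  have hinj : Function.Injective (S.Td d) := fun y z h =>
    funext fun i => S.T_inj (congrFun h i)
  have hmp : MeasurePreserving (S.Td d) σ σ :=
    ⟨hTd, Measure.ext fun A hA => by rw [Measure.map_apply hTd hA, hinv A hA]⟩
  have hC : MeasurableSet (S.towerD d n) := by
    have : S.towerD d n = ⋂ i, (fun y : S.Xd d => y i) ⁻¹' S.tower n := by
      ext y; simp [NFC.towerD]
    rw [this]
    refine MeasurableSet.iInter fun i => measurable_pi_apply i ?_
    exact ((isOpen_coord_mem n {none}ᶜ).preimage continuous_subtype_val).measurableSet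
  have hW0 : σ W = 0 := measure_wandering_eq_zero σ (S.Td d) hTd hinj hinv _ hC hfin hrec W hW
    fun j j' hjj => hdisj (j : ℤ) (j' : ℤ) (by exact_mod_cast hjj)
  have hall : ∀ j : ℤ, σ (iterZ (S.Td d) j W) = 0 := by
    rintro (k | k)
    · have hm : MeasurableSet ((S.Td d)^[k] '' W) :=
        hW.image_of_measurable_injOn (hTd.iterate k) (hinj.iterate k).injOn
      change σ ((S.Td d)^[k] '' W) = 0
      rw [← (hmp.iterate k).measure_preimage hm.nullMeasurableSet,
        preimage_image_eq _ (hinj.iterate k), hW0]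
    · change σ ((S.Td d)^[k + 1] ⁻¹' W) = 0
      rw [(hmp.iterate (k + 1)).measure_preimage hW.nullMeasurableSet, hW0]
  rw [← Measure.measure_univ_eq_zero, ← union_compl_self (⋃ j : ℤ, iterZ (S.Td d) j W)]
  exact measure_union_null (measure_iUnion_null hall) hcov

/-- There is no (nonzero) Radon, `T^{×d}`-invariant and totally dissipative
measure on `X^d` for which `X_∞^d` is conull; in particular there is none whose marginals
are absolutely continuous with respect to `μ`. -/
theorem stmt2 (S : NFCX) (d : ℕ) (hd : 1 ≤ d) :
    (¬ ∃ σ : Measure (S.toNFC.Xd d), σ ≠ 0 ∧ S.toNFC.IsRadon d σ ∧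
        S.toNFC.InvariantD d σ ∧ S.toNFC.TotallyDissipative d σ ∧
        σ {y : S.toNFC.Xd d | ¬ ∀ i, y i ∈ S.Xinf} = 0) ∧
    (¬ ∃ σ : Measure (S.toNFC.Xd d), σ ≠ 0 ∧ S.toNFC.IsRadon d σ ∧
        S.toNFC.InvariantD d σ ∧ S.toNFC.TotallyDissipative d σ ∧
        ∀ i : Fin d, Measure.map (fun y : S.toNFC.Xd d => y i) σ ≪ S.μ) := by
  have main : ∀ σ : Measure (S.toNFC.Xd d), S.toNFC.IsRadon d σ → S.toNFC.InvariantD d σ →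
      S.toNFC.TotallyDissipative d σ → σ {y : S.toNFC.Xd d | ¬ ∀ i, y i ∈ S.Xinf} = 0 →
      σ = 0 := by
    intro σ hR hI hD hX
    obtain ⟨n, hn⟩ := S.exists_recurrent_tower d
    have hae : ∀ᵐ y ∂σ, ∀ i, y i ∈ S.Xinf := hX
    exact S.toNFC.eq_zero_of_recurrent d σ hI hD n (hR n) (hae.mono hn)
  refine ⟨?_, ?_⟩
  · rintro ⟨σ, h0, hR, hI, hD, hX⟩
    exact h0 (main σ hR hI hD hX)
  · rintro ⟨σ, h0, hR, hI, hD, hac⟩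
    refine h0 (main σ hR hI hD ?_)
    have hae : ∀ᵐ y ∂σ, ∀ i, y i ∈ S.Xinf := ae_all_iff.2 fun i =>
      Measure.preimage_null_of_map_null (measurable_pi_apply i).aemeasurable
        (hac i S.Xinf_conull)
    exact hae
end
end

section
/- The nearly finite Chacon transformation (X, μ, T) is rationally ergodic: there exist a Borel set B ⊆ X with 0 < μ(B) < ∞ (one may take B to be the unique level L_0^0 of tower 0) and a constant M > 0 such that for every integer r ≥ 1, ∫_B (Σ_{j=0}^{r-1} 1_B(T^j y))^2 dμ(y) ≤ M · (∫_B Σ_{j=0}^{r-1} 1_B(T^j y) dμ(y))^2. -/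
/-!
Rational ergodicity holds with the constant `M = 6`, by comparing the number of visits to
`B = L_0^0` with the height of a tower.

Let `N_r(y) = ∑_{j<r} 1_B(T^j y)` and let `A_n` be the set of indices of the levels of tower `n`
contained in `B`. Since `B` is contained in tower `n` and `μ(B) = 1`, the set `A_n` has exactly
`3 ^ n` elements. Given `r ≥ 1`, choose `n` with `h_n ≤ r < h_{n+1}`.

* Upper bound (`card_visits_le`): two visits of an orbit to the same level of tower `n+1` are at
  least `h_{n+1}` steps apart (`proj_sep`), so along an orbit segment of length `r` each level of
  tower `n+1` is visited at most once, and `N_r ≤ |A_{n+1}| = 3 ^ (n+1)` everywhere.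
* Lower bound (`le_two_mul_lintegral_visits`): a point of the level `k ∈ A_n` climbs through all
  the levels `l ∈ A_n` with `l ≥ k` in time less than `h_n ≤ r`. Summing over `k`, at least half
  of the pairs in `A_n × A_n` are counted, whence `∫_B N_r dμ ≥ 3 ^ (-n) |A_n|² / 2 = 3 ^ n / 2`.

Therefore `N_r ≤ 6 ∫_B N_r dμ` pointwise, and multiplying by `N_r` and integrating over `B` gives
the claim.
-/

open MeasureTheory Set Filter Topology
open scoped ENNReal
open scoped Classical

noncomputable section

/-! ### Heights and projections between towers -/

namespace NFCseq

theorem lt_hgt (P : NFCseq) (n : ℕ) : n < P.hgt n := by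
  induction n with
  | zero => exact P.hgt_pos 0
  | succ n ih => rw [hgt_succ]; omega

/-- Level `j` of tower `n+1` lies in a full copy of tower `n`, which starts at level `j - k`
and ends below the top of tower `n+1`. -/
theorem pmap_bounds (P : NFCseq) {n j k : ℕ} (h : P.pmap n j = some k) :
    k < P.hgt n ∧ k ≤ j ∧ j + P.hgt n ≤ P.hgt (n + 1) + k := by
  have := P.hgt_succ n
  unfold pmap at h
  split_ifs at h <;> simp only [Option.some.injEq] at h <;> omega

theorem pmap_succ (P : NFCseq) {n j k : ℕ} (h : P.pmap n j = some k) (hk : k + 1 < P.hgt n) :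
    P.pmap n (j + 1) = some (k + 1) := by
  unfold pmap at h ⊢
  split_ifs at h ⊢ <;> simp only [Option.some.injEq] at h ⊢ <;> omega

/-- Two levels of tower `n+1` either lie in the same copy of tower `n`, or in copies whose
starting points differ by at least `h_n`. -/
theorem pmap_copies (P : NFCseq) {n i j k l : ℕ} (hi : P.pmap n i = some k)
    (hj : P.pmap n j = some l) (hij : i < j) : i + l = j + k ∨ i + P.hgt n + l ≤ j + k := by
  unfold pmap at hi hj
  split_ifs at hi hj <;> simp only [Option.some.injEq] at hi hj <;> omega

/-- The map sending the index of a level of tower `n + d` to the index of the level of tower `n`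
containing it (`none` if that level lies outside tower `n`). -/
def proj (P : NFCseq) (n : ℕ) : ℕ → ℕ → Option ℕ
  | 0, j => some j
  | d + 1, j => (P.pmap (n + d) j).bind (proj P n d)

theorem proj_coord (P : NFCseq) (x : P.Xpt) (n d : ℕ) :
    x.1 n = (x.1 (n + d)).bind (P.proj n d) := by
  induction d with
  | zero => cases x.1 n <;> simp [proj]
  | succ d ih =>
    rw [ih, x.2.1 (n + d), Option.bind_assoc]
    rfl

theorem coord_lt (P : NFCseq) {x : P.Xpt} {n k : ℕ} (h : x.1 n = some k) : k < P.hgt n := by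
  rw [x.2.1 n, Option.bind_eq_some_iff] at h
  obtain ⟨j, -, hj⟩ := h
  exact (P.pmap_bounds hj).1

/-- The copy of tower `n` containing level `j` of tower `n + d`, which starts at level `j - k`,
is entirely contained in tower `n + d`. -/
theorem proj_bounds (P : NFCseq) (n : ℕ) {d j k : ℕ} (h : P.proj n d j = some k) :
    k ≤ j ∧ j + P.hgt n ≤ P.hgt (n + d) + k := by
  induction d generalizing j with
  | zero => simp only [proj, Option.some.injEq] at h; simp; omega
  | succ d ih =>
    simp only [proj, Option.bind_eq_some_iff] at h
    obtain ⟨i, hi, hk⟩ := h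
    have h1 := P.pmap_bounds hi
    have h2 := ih hk
    rw [← add_assoc n d 1]
    omega

theorem proj_succ (P : NFCseq) (n : ℕ) {d j k : ℕ} (h : P.proj n d j = some k)
    (hk : k + 1 < P.hgt n) : P.proj n d (j + 1) = some (k + 1) := by
  induction d generalizing j with
  | zero => simp only [proj, Option.some.injEq] at h ⊢; omega
  | succ d ih =>
    simp only [proj, Option.bind_eq_some_iff] at h ⊢
    obtain ⟨i, hi, hik⟩ := h
    have h2 := P.proj_bounds n hik
    exact ⟨i + 1, P.pmap_succ hi (by omega), ih hik⟩

/-- Inside tower `n + d`, two distinct occurrences of the same level of tower `n` are at least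
`h_n` levels apart. -/
theorem proj_sep (P : NFCseq) (n : ℕ) {d i j k : ℕ} (hi : P.proj n d i = some k)
    (hj : P.proj n d j = some k) (hij : i < j) : i + P.hgt n ≤ j := by
  induction d generalizing i j with
  | zero => simp only [proj, Option.some.injEq] at hi hj; omega
  | succ d ih =>
    simp only [proj, Option.bind_eq_some_iff] at hi hj
    obtain ⟨i', hi, hi'⟩ := hi
    obtain ⟨j', hj, hj'⟩ := hj
    have b1 := P.proj_bounds n hi'
    have b2 := P.proj_bounds n hj'
    rcases P.pmap_copies hi hj hij with h | h
    · have := ih hi' hj' (by omega)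
      omega
    · omega

/-- `A_n`: the indices of the levels of tower `n` contained in `L_0^0`. -/
def baseLevels (P : NFCseq) (n : ℕ) : Finset ℕ :=
  (Finset.range (P.hgt n)).filter fun k => P.proj 0 n k = some 0

theorem mem_baseLevels_of_coord (P : NFCseq) {x : P.Xpt} {n k : ℕ} (h : x.1 n = some k) :
    k ∈ P.baseLevels n ↔ x ∈ P.level 0 0 := by
  have h1 := P.proj_coord x 0 n
  rw [zero_add, h, Option.bind_some] at h1
  simp [baseLevels, level, P.coord_lt h, h1]

theorem level_zero_eq_biUnion (P : NFCseq) (n : ℕ) :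
    P.level 0 0 = ⋃ k ∈ P.baseLevels n, P.level n k := by
  ext x
  simp only [mem_iUnion, exists_prop]
  constructor
  · intro hx
    have h1 := P.proj_coord x 0 n
    rw [zero_add, show x.1 0 = some 0 from hx] at h1
    obtain ⟨k, hk, -⟩ := Option.bind_eq_some_iff.1 h1.symm
    exact ⟨k, (P.mem_baseLevels_of_coord hk).2 hx, hk⟩
  · rintro ⟨k, hk, hx⟩
    exact (P.mem_baseLevels_of_coord hx).1 hk

theorem measurableSet_level (P : NFCseq) (n k : ℕ) : MeasurableSet (P.level n k) := by
  have : BorelSpace P.Xpt := ⟨rfl⟩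
  have : DiscreteTopology (Option ℕ) := ⟨rfl⟩
  have hc : Continuous fun x : P.Xpt => x.1 n := (continuous_apply n).comp continuous_subtype_val
  exact ((isOpen_discrete {some k}).preimage hc).measurableSet

theorem pairwiseDisjoint_level (P : NFCseq) (n : ℕ) (s : Set ℕ) :
    s.PairwiseDisjoint (P.level n) := by
  intro i _ j _ hij
  refine Set.disjoint_left.2 fun x hi hj => hij ?_
  exact Option.some.inj ((show x.1 n = some i from hi).symm.trans hj)

end NFCseq

/-! ### Orbits seen in the towers -/

namespace NFC

open NFCseq

/-- In every sufficiently high tower, a given finite orbit segment climbs through consecutive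
levels. -/
theorem exists_climb (S : NFC) (y : S.toNFCseq.Xpt) (r : ℕ) :
    ∃ N, ∀ m, N ≤ m → ∃ j, ∀ i ≤ r, (S.T^[i] y).1 m = some (j + i) := by
  induction r with
  | zero =>
    obtain ⟨N, hN⟩ := S.T_up y
    refine ⟨N, fun m hm => ?_⟩
    obtain ⟨j, hj, -⟩ := hN m hm
    refine ⟨j, fun i hi => ?_⟩
    obtain rfl : i = 0 := by omega
    exact hj
  | succ r ih =>
    obtain ⟨N, hN⟩ := ih
    obtain ⟨N', hN'⟩ := S.T_up (S.T^[r] y)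
    refine ⟨max N N', fun m hm => ?_⟩
    obtain ⟨j, hj⟩ := hN m (le_trans (le_max_left _ _) hm)
    obtain ⟨j', hj', hT⟩ := hN' m (le_trans (le_max_right _ _) hm)
    refine ⟨j, fun i hi => ?_⟩
    rcases Nat.lt_or_ge r i with h | h
    · obtain rfl : i = r + 1 := by omega
      have e : j + r = j' := Option.some.inj ((hj r le_rfl).symm.trans hj')
      rw [Function.iterate_succ_apply', hT, ← e, add_assoc]
    · exact hj i h

theorem coord_T (S : NFC) {x : S.toNFCseq.Xpt} {n k : ℕ} (h : x.1 n = some k)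
    (hk : k + 1 < S.hgt n) : (S.T x).1 n = some (k + 1) := by
  obtain ⟨N, hN⟩ := S.T_up x
  obtain ⟨j, hj, hT⟩ := hN (n + N) (by omega)
  rw [S.proj_coord x n N, hj] at h
  rw [S.proj_coord (S.T x) n N, hT]
  exact S.proj_succ n h hk

theorem coord_iterate (S : NFC) {x : S.toNFCseq.Xpt} {n k : ℕ} (h : x.1 n = some k) (i : ℕ)
    (hk : k + i < S.hgt n) : (S.T^[i] x).1 n = some (k + i) := by
  induction i with
  | zero => exact h
  | succ i ih =>
    rw [Function.iterate_succ_apply']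
    exact S.coord_T (ih (by omega)) hk

/-- `N_r(y)`: the number of visits of `y` to `L_0^0` during the first `r` steps. -/
def visits (S : NFC) (r : ℕ) (y : S.toNFCseq.Xpt) : ℕ :=
  ((Finset.range r).filter fun j => S.T^[j] y ∈ S.level 0 0).card

theorem sum_indicator_eq_visits (S : NFC) (r : ℕ) (y : S.toNFCseq.Xpt) :
    (∑ j ∈ Finset.range r, (S.level 0 0).indicator (1 : S.toNFCseq.Xpt → ℝ≥0∞) (S.T^[j] y)) =
      S.visits r y := by
  simp [visits, Set.indicator_apply]

/-- During at most `h_n` steps, an orbit visits each level of tower `n` at most once, so the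
number of visits to `L_0^0` is at most the number of levels of tower `n` contained in it. -/
theorem card_visits_le (S : NFC) {n r : ℕ} (hr : r ≤ S.hgt n) (y : S.toNFCseq.Xpt) :
    S.visits r y ≤ (S.baseLevels n).card := by
  have key : ∀ i, S.T^[i] y ∈ S.level 0 0 →
      ∃ k ∈ S.baseLevels n, (S.T^[i] y).1 n = some k := by
    intro i hi
    rw [S.level_zero_eq_biUnion n] at hi
    obtain ⟨k, hk, h⟩ := mem_iUnion₂.1 hi
    exact ⟨k, hk, h⟩
  obtain ⟨N, hN⟩ := S.exists_climb y r
  obtain ⟨j, hj⟩ := hN (n + N) (by omega)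
  have sep : ∀ a b k : ℕ, a < b → b < r → (S.T^[a] y).1 n = some k →
      (S.T^[b] y).1 n = some k → False := by
    intro a b k hab hb ha hb'
    rw [S.proj_coord _ n N, hj _ (by omega), Option.bind_some] at ha hb'
    have := S.proj_sep n ha hb' (by omega)
    omega
  refine Finset.card_le_card_of_injOn (fun i => ((S.T^[i] y).1 n).getD 0) ?_ ?_
  · intro i hi
    obtain ⟨k, hk, h⟩ := key i (Finset.mem_filter.1 hi).2
    simpa [h] using hk
  · intro a ha b hb hab
    simp only [Finset.coe_filter, mem_ofPred_eq, Finset.mem_range] at ha hb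
    obtain ⟨k, -, hk⟩ := key a ha.2
    obtain ⟨l, -, hl⟩ := key b hb.2
    simp only [hk, hl, Option.getD_some] at hab
    subst hab
    rcases lt_trichotomy a b with h | h | h
    · exact (sep a b k h hb.1 hk hl).elim
    · exact h
    · exact (sep b a k h ha.1 hl hk).elim

/-- From the level `k` of tower `n`, all the levels of `A_n` that are not below `k` are visited
within `h_n` steps. -/
theorem le_visits (S : NFC) {n r k : ℕ} (hr : S.hgt n ≤ r) {y : S.toNFCseq.Xpt}
    (hy : y ∈ S.level n k) :
    ((S.baseLevels n).filter fun l => k ≤ l).card ≤ S.visits r y := by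
  refine Finset.card_le_card_of_injOn (fun l => l - k) ?_ ?_
  · intro l hl
    obtain ⟨hlA, hkl⟩ := Finset.mem_filter.1 hl
    have hlh : l < S.hgt n := Finset.mem_range.1 (Finset.mem_filter.1 hlA).1
    have h := S.coord_iterate (show y.1 n = some k from hy) (l - k) (by omega)
    rw [Nat.add_sub_cancel' hkl] at h
    simp only [Finset.coe_filter, mem_ofPred_eq, Finset.mem_range]
    exact ⟨by omega, (S.mem_baseLevels_of_coord h).1 hlA⟩
  · intro a ha b hb hab
    have := (Finset.mem_filter.1 ha).2
    have := (Finset.mem_filter.1 hb).2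
    simp only at hab
    omega

/-! ### The measure of the base and the integral of the number of visits -/

theorem measure_base (S : NFC) : S.μ (S.level 0 0) = 1 := by
  simpa using S.μ_level 0 0 (S.hgt_pos 0)

theorem measure_baseLevel (S : NFC) {n k : ℕ} (hk : k ∈ S.baseLevels n) :
    S.μ (S.level n k) = (3 : ℝ≥0∞)⁻¹ ^ n :=
  S.μ_level n k (Finset.mem_range.1 (Finset.mem_filter.1 hk).1)

/-- Since `L_0^0` has measure `1` and is the union of the levels of tower `n` indexed by `A_n`,
each of measure `3 ^ (-n)`, the set `A_n` has `3 ^ n` elements. -/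
theorem card_baseLevels (S : NFC) (n : ℕ) :
    ((S.baseLevels n).card : ℝ≥0∞) = 3 ^ n := by
  have h := S.measure_base
  rw [S.level_zero_eq_biUnion n, measure_biUnion_finset (S.pairwiseDisjoint_level n _)
    (fun k _ => S.measurableSet_level n k),
    Finset.sum_congr rfl (fun k hk => S.measure_baseLevel hk), Finset.sum_const,
    nsmul_eq_mul, ← ENNReal.inv_pow] at h
  rw [ENNReal.eq_inv_of_mul_eq_one_left h, inv_inv]

/-- By symmetry, at least half of the pairs `(k, l)` of a finite set of integers satisfy
`k ≤ l`. -/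
theorem card_sq_le (A : Finset ℕ) :
    A.card * A.card ≤ 2 * ∑ k ∈ A, (A.filter fun l => k ≤ l).card := by
  have e : ∑ k ∈ A, (A.filter fun l => k ≤ l).card = ∑ k ∈ A, (A.filter fun l => l ≤ k).card := by
    simp only [Finset.card_filter]
    exact Finset.sum_comm
  rw [two_mul]
  nth_rewrite 2 [e]
  rw [← Finset.sum_add_distrib, ← smul_eq_mul, ← Finset.sum_const]
  refine Finset.sum_le_sum fun k _ => ?_
  refine le_trans (Finset.card_le_card fun l hl => ?_) (Finset.card_union_le _ _)
  rcases le_total k l with h | h <;> simp [hl, h]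

theorem le_two_mul_lintegral_visits (S : NFC) {n r : ℕ} (hr : S.hgt n ≤ r) :
    (3 : ℝ≥0∞) ^ n ≤ 2 * ∫⁻ y in S.level 0 0, (S.visits r y : ℝ≥0∞) ∂S.μ := by
  set A := S.baseLevels n with hA
  have h1 : (∑ k ∈ A, ((A.filter fun l => k ≤ l).card : ℝ≥0∞)) * (3 ^ n)⁻¹ ≤
      ∫⁻ y in S.level 0 0, (S.visits r y : ℝ≥0∞) ∂S.μ := by
    rw [S.level_zero_eq_biUnion n, lintegral_biUnion_finset (S.pairwiseDisjoint_level n _)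
      (fun k _ => S.measurableSet_level n k), Finset.sum_mul]
    refine Finset.sum_le_sum fun k hk => ?_
    rw [ENNReal.inv_pow, ← S.measure_baseLevel hk, ← setLIntegral_const]
    exact setLIntegral_mono' (S.measurableSet_level n k)
      fun y hy => Nat.cast_le.2 (S.le_visits hr hy)
  have h2 : (3 : ℝ≥0∞) ^ n * 3 ^ n ≤ 2 * ∑ k ∈ A, ((A.filter fun l => k ≤ l).card : ℝ≥0∞) := by
    rw [← S.card_baseLevels n]
    exact_mod_cast card_sq_le A
  have h0 : (3 : ℝ≥0∞) ^ n ≠ 0 := by simp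
  have ht : (3 : ℝ≥0∞) ^ n ≠ ⊤ := by simp
  calc (3 : ℝ≥0∞) ^ n = 3 ^ n * 3 ^ n * (3 ^ n)⁻¹ := by
        rw [mul_assoc, ENNReal.mul_inv_cancel h0 ht, mul_one]
    _ ≤ 2 * (∑ k ∈ A, ((A.filter fun l => k ≤ l).card : ℝ≥0∞)) * (3 ^ n)⁻¹ := by gcongr
    _ ≤ _ := by rw [mul_assoc]; gcongr

theorem exists_hgt_le_lt (P : NFCseq) {r : ℕ} (hr : 1 ≤ r) :
    ∃ n, P.hgt n ≤ r ∧ r < P.hgt (n + 1) := by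
  have hex : ∃ m, r < P.hgt m := ⟨r, P.lt_hgt r⟩
  have hpos : Nat.find hex ≠ 0 := by
    intro h
    have := Nat.find_spec hex
    rw [h, hgt] at this
    omega
  obtain ⟨n, hn⟩ := Nat.exists_eq_succ_of_ne_zero hpos
  refine ⟨n, not_lt.1 (Nat.find_min hex (by omega)), ?_⟩
  have := Nat.find_spec hex
  rwa [hn] at this

end NFC

/-! ### Rational ergodicity -/

/-- The nearly finite Chacon transformation is rationally ergodic: there
exist a Borel set `B` with `0 < μ(B) < ∞` (one may take `B = L_0^0`) and a constant
`M > 0` such that for every `r ≥ 1`,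
`∫_B (∑_{j<r} 1_B(T^j y))² dμ ≤ M (∫_B ∑_{j<r} 1_B(T^j y) dμ)²`. -/
theorem stmt3 (S : NFC) :
    ∃ B : Set S.toNFCseq.Xpt, B = S.toNFCseq.level 0 0 ∧ MeasurableSet B ∧
      0 < S.μ B ∧ S.μ B < ⊤ ∧
      ∃ M : ℝ≥0∞, 0 < M ∧ M ≠ ⊤ ∧
        ∀ r : ℕ, 1 ≤ r →
          (∫⁻ y in B, (∑ j ∈ Finset.range r, B.indicator 1 (S.T^[j] y)) ^ 2 ∂S.μ) ≤
            M * (∫⁻ y in B, (∑ j ∈ Finset.range r, B.indicator 1 (S.T^[j] y)) ∂S.μ) ^ 2 := by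
  refine ⟨_, rfl, S.measurableSet_level 0 0, by simp [S.measure_base], by simp [S.measure_base],
    6, by simp, by simp, fun r hr => ?_⟩
  simp only [S.sum_indicator_eq_visits]
  obtain ⟨n, hn, hn'⟩ := NFC.exists_hgt_le_lt S.toNFCseq hr
  set I := ∫⁻ y in S.level 0 0, (S.visits r y : ℝ≥0∞) ∂S.μ with hI
  have hup : ∀ y, (S.visits r y : ℝ≥0∞) ≤ 3 ^ (n + 1) := fun y => by
    rw [← S.card_baseLevels (n + 1)]
    exact Nat.cast_le.2 (S.card_visits_le hn'.le y)
  calc ∫⁻ y in S.level 0 0, (S.visits r y : ℝ≥0∞) ^ 2 ∂S.μ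
      ≤ ∫⁻ y in S.level 0 0, 3 ^ (n + 1) * (S.visits r y : ℝ≥0∞) ∂S.μ := by
        refine lintegral_mono fun y => ?_
        simp only [sq]
        exact mul_le_mul_left (hup y) _
    _ = 3 ^ (n + 1) * I := lintegral_const_mul' _ _ (by simp)
    _ = 3 ^ n * 3 * I := by rw [pow_succ]
    _ ≤ 2 * I * 3 * I := by
        gcongr
        exact S.le_two_mul_lintegral_visits hn
    _ = 6 * I ^ 2 := by ring
end
end
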